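/- There is a universal constant C > 0 with the following property. Let 𝒢 = (G_1, …, G_ℓ) be a connected temporal graph with n ≥ 2 vertices and orbit number r = |𝒢/Aut(𝒢)|, and let S be an orbit of Aut(𝒢). For any time step t with t + C·(n^{5/3} + r·n)·log n ≤ ℓ, there exists a temporal walk W starting at time step t that visits all vertices of S and ends at a time step t' with t' − t ≤ C·(n^{5/3} + r·n)·log n. -/

import Mathlib

/-!
Averaging over `Aut(𝒢)` gives a walk of `O((n^{3/2} + r n) log n)` steps, which is within the
bound.

Let `A` be a proper subset of the orbit `S`. In a connected temporal graph the reachable set grows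
by a vertex per step, so after about `|A| n / |S|` steps it has density larger than `|A| / |S|` in
`V`, hence in some orbit `O`. The quotient of each snapshot by `Aut(𝒢)` is connected, so some walk
leads from `O` to `S` in `r` steps; a random automorphic image of it starts in the reachable set
with probability above `|A| / |S|` and ends in `A` with probability `|A| / |S|`, so some image
continues the walk to a vertex of `S \ A` (`exists_trip_new`).

Repeating this, `k` vertices of `S` are visited in `k (k n / |S| + r)` steps (`exists_trip_many`),
which is `O(n)` for `k ≈ min (√|S|) (n / r)`. If `U ⊆ S` is unvisited, an average automorphic image
of such a walk meets `k |U| / |S|` vertices of `U`, and its start can be reached in `n` steps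
(`exists_trip_share`). So `O(n)` steps shrink `U` by the factor `1 - k / |S|`, and
`O((|S| / k) log |S|)` rounds, with `|S| / k = O(√n + r)`, visit all of `S` (`exists_trip_all`,
`exists_parameters`).
-/

open scoped BigOperators

/-- A temporal graph on a finite vertex set `V`: a lifetime `ℓ` together with a
snapshot graph `snap t` for every time step `t` (only `t ∈ [1, ℓ]` is relevant). -/
structure TemporalGraph (V : Type) [Fintype V] where
  lifetime : ℕ
  snap : ℕ → SimpleGraph V

namespace TemporalGraph

variable {V : Type} [Fintype V]

/-- A temporal graph is connected if every snapshot within its lifetime is connected. -/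
def IsConnectedTG (𝒢 : TemporalGraph V) : Prop :=
  ∀ t, 1 ≤ t → t ≤ 𝒢.lifetime → (𝒢.snap t).Connected

/-- `W` is a temporal walk starting at time step `t` and ending at time step `t'`:
at each time step `s` with `t ≤ s < t'` it either waits or traverses an edge of
the snapshot `G_s`. -/
def IsWalk (𝒢 : TemporalGraph V) (W : ℕ → V) (t t' : ℕ) : Prop :=
  1 ≤ t ∧ t ≤ t' ∧ t' ≤ 𝒢.lifetime ∧
    ∀ s, t ≤ s → s < t' → W (s + 1) = W s ∨ (𝒢.snap s).Adj (W s) (W (s + 1))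

/-- The set of vertices visited by `W` between time steps `t` and `t'`. -/
def visited (W : ℕ → V) (t t' : ℕ) : Set V := W '' Set.Icc t t'

/-- `σ` is an automorphism of the temporal graph `𝒢`, i.e. an automorphism of
every snapshot within the lifetime. -/
def IsAut (𝒢 : TemporalGraph V) (σ : Equiv.Perm V) : Prop :=
  ∀ t, 1 ≤ t → t ≤ 𝒢.lifetime →
    ∀ u v : V, (𝒢.snap t).Adj u v ↔ (𝒢.snap t).Adj (σ u) (σ v)

/-- The orbit of a vertex `u` under `Aut(𝒢)`. -/
def orbit (𝒢 : TemporalGraph V) (u : V) : Set V :=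
  {v | ∃ σ : Equiv.Perm V, 𝒢.IsAut σ ∧ σ u = v}

/-- `S` is an orbit of `Aut(𝒢)`. -/
def IsOrbit (𝒢 : TemporalGraph V) (S : Set V) : Prop :=
  ∃ u : V, S = 𝒢.orbit u

/-- The orbit number of `𝒢`: the number of orbits of `Aut(𝒢)` on `V`. -/
noncomputable def orbitNumber (𝒢 : TemporalGraph V) : ℕ :=
  (Set.range 𝒢.orbit).ncard

/-- Vertices reachable from `u` by a temporal walk starting at time step `t`
and ending at a time step at most `t'`. -/
def reachSet (𝒢 : TemporalGraph V) (u : V) (t t' : ℕ) : Set V :=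
  {v | ∃ t'' ≤ t', ∃ W : ℕ → V, 𝒢.IsWalk W t t'' ∧ W t = u ∧ W t'' = v}

/-- `W` is a temporal walk that only traverses orbit boundary edges
(edges between two different orbits); waiting is allowed. -/
def IsBoundaryWalk (𝒢 : TemporalGraph V) (W : ℕ → V) (t t' : ℕ) : Prop :=
  1 ≤ t ∧ t ≤ t' ∧ t' ≤ 𝒢.lifetime ∧
    ∀ s, t ≤ s → s < t' → W (s + 1) = W s ∨
      ((𝒢.snap s).Adj (W s) (W (s + 1)) ∧ 𝒢.orbit (W s) ≠ 𝒢.orbit (W (s + 1)))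

/-- The lane `L_{t,t'}(X)`: all vertices reachable from some vertex of `X` by a
temporal walk starting at time step `t`, ending at a time step at most `t'`,
that only uses orbit boundary edges. -/
def lane (𝒢 : TemporalGraph V) (X : Set V) (t t' : ℕ) : Set V :=
  {v | ∃ u ∈ X, ∃ t'' ≤ t', ∃ W : ℕ → V, 𝒢.IsBoundaryWalk W t t'' ∧ W t = u ∧ W t'' = v}

/-! ### Walks with prescribed endpoints -/

/-- Some walk from `x` at time `t` to `y` at time `t'` visits every vertex of `B`
(and possibly others). -/
def Trip (𝒢 : TemporalGraph V) (t t' : ℕ) (x y : V) (B : Finset V) : Prop :=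
  ∃ W : ℕ → V, 𝒢.IsWalk W t t' ∧ W t = x ∧ W t' = y ∧ (B : Set V) ⊆ visited W t t'

theorem Trip.wait {𝒢 : TemporalGraph V} {t t' : ℕ} (x : V) (h1 : 1 ≤ t) (h : t ≤ t')
    (h2 : t' ≤ 𝒢.lifetime) : 𝒢.Trip t t' x x {x} :=
  ⟨fun _ => x, ⟨h1, h, h2, fun _ _ _ => Or.inl rfl⟩, rfl, rfl, by
    intro v hv
    simp only [Finset.coe_singleton, Set.mem_singleton_iff] at hv
    exact ⟨t, ⟨le_rfl, h⟩, hv.symm⟩⟩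

theorem Trip.step {𝒢 : TemporalGraph V} {t : ℕ} {x y : V} (h1 : 1 ≤ t)
    (h2 : t + 1 ≤ 𝒢.lifetime) (h : x = y ∨ (𝒢.snap t).Adj x y) :
    𝒢.Trip t (t + 1) x y ∅ := by
  refine ⟨fun s => if s ≤ t then x else y, ⟨h1, by omega, h2, ?_⟩, by simp, by simp, by simp⟩
  intro s hs hs'
  have : s = t := by omega
  subst this
  rcases h with h | h
  · left; simp [h]
  · right; simpa using h

theorem Trip.mono {𝒢 : TemporalGraph V} {t t' : ℕ} {x y : V} {B B' : Finset V}
    (h : 𝒢.Trip t t' x y B) (hB : B' ⊆ B) : 𝒢.Trip t t' x y B' := by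
  obtain ⟨W, h1, h2, h3, h4⟩ := h
  exact ⟨W, h1, h2, h3, (Finset.coe_subset.2 hB).trans h4⟩

open Classical in
theorem Trip.trans {𝒢 : TemporalGraph V} {t t' t'' : ℕ} {x y z : V} {B B' : Finset V}
    (h : 𝒢.Trip t t' x y B) (h' : 𝒢.Trip t' t'' y z B') : 𝒢.Trip t t'' x z (B ∪ B') := by
  obtain ⟨W, ⟨h1, h2, h3, h4⟩, h5, h6, h7⟩ := h
  obtain ⟨W', ⟨k1, k2, k3, k4⟩, k5, k6, k7⟩ := h'
  have hl : ∀ s, s ≤ t' → (if s ≤ t' then W s else W' s) = W s := fun s hs => by simp [hs]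
  have hr : ∀ s, t' ≤ s → (if s ≤ t' then W s else W' s) = W' s := fun s hs => by
    split_ifs with hc
    · have : s = t' := by omega
      subst this
      rw [h6, k5]
    · rfl
  refine ⟨fun s => if s ≤ t' then W s else W' s, ⟨h1, by omega, k3, ?_⟩, ?_, ?_, ?_⟩
  · intro s hs hs'
    simp only
    by_cases hc : s < t'
    · rw [hl s (by omega), hl (s + 1) (by omega)]
      exact h4 s hs hc
    · rw [hr s (by omega), hr (s + 1) (by omega)]
      exact k4 s (by omega) hs'
  · simp only; rw [hl t h2, h5]
  · simp only; rw [hr t'' k2, k6]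
  · intro v hv
    rw [Finset.coe_union] at hv
    rcases hv with hv | hv
    · obtain ⟨s, hs, rfl⟩ := h7 hv
      exact ⟨s, ⟨hs.1, hs.2.trans k2⟩, hl s hs.2⟩
    · obtain ⟨s, hs, rfl⟩ := k7 hv
      exact ⟨s, ⟨h2.trans hs.1, hs.2⟩, hr s hs.1⟩

theorem Trip.end_mem {𝒢 : TemporalGraph V} {t t' : ℕ} {x y : V} {B : Finset V}
    (h : 𝒢.Trip t t' x y B) : 𝒢.Trip t t' x y {y} := by
  obtain ⟨W, h1, h2, h3, h4⟩ := h
  refine ⟨W, h1, h2, h3, ?_⟩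
  intro v hv
  simp only [Finset.coe_singleton, Set.mem_singleton_iff] at hv
  exact ⟨t', ⟨h1.2.1, le_rfl⟩, by rw [h3, hv]⟩

open Classical in
/-- Automorphisms carry walks to walks. -/
theorem Trip.map {𝒢 : TemporalGraph V} {t t' : ℕ} {x y : V} {B : Finset V}
    {σ : Equiv.Perm V} (hσ : 𝒢.IsAut σ) (h : 𝒢.Trip t t' x y B) :
    𝒢.Trip t t' (σ x) (σ y) (B.image σ) := by
  obtain ⟨W, ⟨h1, h2, h3, h4⟩, h5, h6, h7⟩ := h
  refine ⟨fun s => σ (W s), ⟨h1, h2, h3, ?_⟩, by simp [h5], by simp [h6], ?_⟩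
  · intro s hs hs'
    rcases h4 s hs hs' with h | h
    · left; simp [h]
    · right; exact (hσ s (by omega) (by omega) _ _).1 h
  · intro v hv
    simp only [Finset.coe_image] at hv
    obtain ⟨b, hb, rfl⟩ := hv
    obtain ⟨s, hs, rfl⟩ := h7 hb
    exact ⟨s, hs, rfl⟩

/-! ### The automorphism group and averaging over it -/

open Classical in
/-- `Aut(𝒢)` as a finite set of permutations. -/
noncomputable def autSet (𝒢 : TemporalGraph V) : Finset (Equiv.Perm V) :=
  Finset.univ.filter 𝒢.IsAut

theorem mem_autSet {𝒢 : TemporalGraph V} {σ : Equiv.Perm V} : σ ∈ 𝒢.autSet ↔ 𝒢.IsAut σ := by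
  simp [autSet]

theorem IsAut.one {𝒢 : TemporalGraph V} : 𝒢.IsAut 1 := fun _ _ _ _ _ => Iff.rfl

theorem IsAut.mul {𝒢 : TemporalGraph V} {σ τ : Equiv.Perm V} (hσ : 𝒢.IsAut σ)
    (hτ : 𝒢.IsAut τ) : 𝒢.IsAut (σ * τ) := fun t h1 h2 u v =>
  (hτ t h1 h2 u v).trans (hσ t h1 h2 _ _)

theorem IsAut.inv {𝒢 : TemporalGraph V} {σ : Equiv.Perm V} (hσ : 𝒢.IsAut σ) :
    𝒢.IsAut σ⁻¹ := fun t h1 h2 u v => by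
  rw [hσ t h1 h2 (σ⁻¹ u) (σ⁻¹ v)]; simp

theorem orbit_eq_iff {𝒢 : TemporalGraph V} {u v : V} :
    𝒢.orbit u = 𝒢.orbit v ↔ ∃ σ, 𝒢.IsAut σ ∧ σ u = v := by
  constructor
  · intro h
    have : v ∈ 𝒢.orbit v := ⟨1, IsAut.one, rfl⟩
    rw [← h] at this
    exact this
  · rintro ⟨σ, hσ, rfl⟩
    ext w
    constructor
    · rintro ⟨τ, hτ, rfl⟩
      exact ⟨τ * σ⁻¹, hτ.mul hσ.inv, by simp⟩
    · rintro ⟨τ, hτ, rfl⟩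
      exact ⟨τ * σ, hτ.mul hσ, rfl⟩

open Classical in
/-- The number of automorphisms that send `w` into `B`. -/
noncomputable def hits (𝒢 : TemporalGraph V) (w : V) (B : Finset V) : ℕ :=
  (𝒢.autSet.filter (fun σ => σ w ∈ B)).card

theorem hits_map {𝒢 : TemporalGraph V} {τ : Equiv.Perm V} (hτ : 𝒢.IsAut τ) (w : V)
    (B : Finset V) : 𝒢.hits (τ w) B = 𝒢.hits w B := by
  classical
  unfold hits
  refine Finset.card_bij (fun σ _ => σ * τ) ?_ ?_ ?_
  · intro σ h
    simp only [Finset.mem_filter, mem_autSet] at h ⊢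
    exact ⟨h.1.mul hτ, h.2⟩
  · intro a _ b _ h
    exact mul_right_cancel h
  · intro σ h
    simp only [Finset.mem_filter, mem_autSet] at h
    refine ⟨σ * τ⁻¹, ?_, by simp⟩
    simp only [Finset.mem_filter, mem_autSet]
    exact ⟨h.1.mul hτ.inv, by simpa using h.2⟩

open Classical in
theorem sum_hits (𝒢 : TemporalGraph V) (X B : Finset V) :
    ∑ w ∈ X, 𝒢.hits w B = ∑ σ ∈ 𝒢.autSet, (X.image σ ∩ B).card := by
  unfold hits
  simp_rw [Finset.card_filter]
  rw [Finset.sum_comm]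
  refine Finset.sum_congr rfl fun σ _ => ?_
  rw [← Finset.card_filter, ← Finset.card_image_of_injective _ σ.injective]
  congr 1
  ext v
  simp only [Finset.mem_image, Finset.mem_filter, Finset.mem_inter]
  constructor
  · rintro ⟨a, ⟨h1, h2⟩, rfl⟩
    exact ⟨⟨a, h1, rfl⟩, h2⟩
  · rintro ⟨⟨a, h1, rfl⟩, h2⟩
    exact ⟨a, ⟨h1, h2⟩, rfl⟩

/-- The finite set `S` is an orbit of `Aut(𝒢)`, expressed as invariance and transitivity. -/
structure FinOrbit (𝒢 : TemporalGraph V) (S : Finset V) : Prop where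
  nonempty : S.Nonempty
  map : ∀ σ, 𝒢.IsAut σ → ∀ u ∈ S, σ u ∈ S
  trans : ∀ u ∈ S, ∀ v ∈ S, ∃ σ, 𝒢.IsAut σ ∧ σ u = v

/-- A uniformly random automorphism sends a vertex of `S` to a uniformly random vertex of `S`. -/
theorem FinOrbit.hits_mul {𝒢 : TemporalGraph V} {S : Finset V} (hS : 𝒢.FinOrbit S)
    {w : V} (hw : w ∈ S) {B : Finset V} (hB : B ⊆ S) :
    S.card * 𝒢.hits w B = 𝒢.autSet.card * B.card := by
  classical
  have h := 𝒢.sum_hits S B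
  have e1 : ∑ v ∈ S, 𝒢.hits v B = S.card * 𝒢.hits w B := by
    rw [Finset.sum_const_nat]
    intro v hv
    obtain ⟨σ, hσ, rfl⟩ := hS.trans w hw v hv
    exact hits_map hσ w B
  have e2 : ∑ σ ∈ 𝒢.autSet, (S.image σ ∩ B).card = 𝒢.autSet.card * B.card := by
    rw [Finset.sum_const_nat]
    intro σ hσ
    congr 1
    refine Finset.inter_eq_right.2 fun b hb => ?_
    refine Finset.mem_image.2 ⟨σ⁻¹ b, hS.map _ (mem_autSet.1 hσ).inv b (hB hb), by simp⟩
  rw [← e1, h, e2]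

/-! ### Growth of reachable sets -/

/-- In connected snapshots, a set that absorbs its neighbours in each step meets at least one
further fibre of `f` per step, as long as it is a union of fibres of `f`. -/
theorem growth {𝒢 : TemporalGraph V} (hc : 𝒢.IsConnectedTG) {ι : Type} (f : V → ι)
    (P : ℕ → Set V) (t J : ℕ) (h1 : 1 ≤ t) (h2 : t + J ≤ 𝒢.lifetime) (h0 : (P 0).Nonempty)
    (sat : ∀ j ≤ J, ∀ u v, f u = f v → u ∈ P j → v ∈ P j)
    (step : ∀ j < J, ∀ u ∈ P j, ∀ v, (u = v ∨ (𝒢.snap (t + j)).Adj u v) → v ∈ P (j + 1)) :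
    min (J + 1) (Set.range f).ncard ≤ (f '' P J).ncard := by
  have hfin : ∀ A : Set V, (f '' A).Finite := fun A => (Set.toFinite A).image f
  induction J with
  | zero =>
    have : 0 < (f '' P 0).ncard := (Set.ncard_pos (hfin _)).2 (h0.image f)
    omega
  | succ J ih =>
    have ih := ih (by omega) (fun j hj => sat j (by omega)) (fun j hj => step j (by omega))
    have hsub : P J ⊆ P (J + 1) := fun u hu => step J (by omega) u hu u (Or.inl rfl)
    by_cases hall : P J = Set.univ
    · have : P (J + 1) = Set.univ := Set.eq_univ_of_univ_subset (hall ▸ hsub)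
      rw [this, Set.image_univ]
      exact min_le_right _ _
    · obtain ⟨b, hb⟩ := (Set.ne_univ_iff_exists_notMem _).1 hall
      have hne : (P J).Nonempty := by
        by_contra hE
        rw [Set.not_nonempty_iff_eq_empty] at hE
        have hr : 0 < (Set.range f).ncard :=
          (Set.ncard_pos (Set.finite_range f)).2 ⟨f b, b, rfl⟩
        simp only [hE, Set.image_empty, Set.ncard_empty] at ih
        omega
      obtain ⟨a, ha⟩ := hne
      obtain ⟨p⟩ := (hc (t + J) (by omega) (by omega)).preconnected a b
      obtain ⟨d, -, hd1, hd2⟩ := p.exists_boundary_dart (P J) ha hb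
      have hnew : f d.snd ∉ f '' P J := by
        rintro ⟨u, hu, hfu⟩
        exact hd2 (sat J (by omega) _ _ hfu hu)
      have hins : insert (f d.snd) (f '' P J) ⊆ f '' P (J + 1) := by
        refine Set.insert_subset ?_ (Set.image_mono hsub)
        exact ⟨_, step J (by omega) _ hd1 _ (Or.inr d.adj), rfl⟩
      have := Set.ncard_le_ncard hins (hfin _)
      rw [Set.ncard_insert_of_notMem hnew (hfin _)] at this
      omega

open Classical in
/-- Vertices reachable from `x` between times `t` and `t'`. -/
noncomputable def ball (𝒢 : TemporalGraph V) (x : V) (t t' : ℕ) : Finset V :=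
  Finset.univ.filter (fun v => 𝒢.Trip t t' x v ∅)

theorem mem_ball {𝒢 : TemporalGraph V} {x v : V} {t t' : ℕ} :
    v ∈ 𝒢.ball x t t' ↔ 𝒢.Trip t t' x v ∅ := by
  simp [ball]

theorem card_ball {𝒢 : TemporalGraph V} (hc : 𝒢.IsConnectedTG) (x : V) {t J : ℕ}
    (h1 : 1 ≤ t) (h2 : t + J ≤ 𝒢.lifetime) :
    min (J + 1) (Fintype.card V) ≤ (𝒢.ball x t (t + J)).card := by
  classical
  have := growth hc (id : V → V) (fun j => (𝒢.ball x t (t + j) : Set V)) t J h1 h2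
    ⟨x, by
      rw [Finset.mem_coe, mem_ball]
      exact (Trip.wait x h1 le_rfl (by omega)).mono (by simp)⟩
    (fun j _ u v h hu => by
      have h : u = v := h
      exact h ▸ hu)
    (fun j hj u hu v huv => by
      rw [Finset.mem_coe, mem_ball] at hu ⊢
      exact (hu.trans (Trip.step (by omega) (by omega) huv)).mono (by simp))
  simpa [Set.ncard_coe_finset, Set.ncard_univ, Nat.card_eq_fintype_card] using this

theorem exists_trip {𝒢 : TemporalGraph V} (hc : 𝒢.IsConnectedTG) (x y : V) {t : ℕ}
    (h1 : 1 ≤ t) (h2 : t + Fintype.card V ≤ 𝒢.lifetime) :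
    𝒢.Trip t (t + Fintype.card V) x y ∅ := by
  have h := card_ball hc x h1 h2
  have : (𝒢.ball x t (t + Fintype.card V)).card = Fintype.card V :=
    le_antisymm (Finset.card_le_univ _) (by omega)
  have := (Finset.card_eq_iff_eq_univ _).1 this
  rw [← mem_ball, this]
  exact Finset.mem_univ _

/-- Up to an automorphism applied to the start, `r` steps suffice to reach any given orbit. -/
theorem exists_trip_orbit {𝒢 : TemporalGraph V} (hc : 𝒢.IsConnectedTG) (x y : V) {t : ℕ}
    (h1 : 1 ≤ t) (h2 : t + 𝒢.orbitNumber ≤ 𝒢.lifetime) :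
    ∃ σ, 𝒢.IsAut σ ∧ 𝒢.Trip t (t + 𝒢.orbitNumber) (σ x) y ∅ := by
  classical
  have hsat : ∀ j, ∀ u v, 𝒢.orbit u = 𝒢.orbit v →
      u ∈ {v | ∃ σ, 𝒢.IsAut σ ∧ 𝒢.Trip t (t + j) (σ x) v ∅} →
      v ∈ {v | ∃ σ, 𝒢.IsAut σ ∧ 𝒢.Trip t (t + j) (σ x) v ∅} := by
    rintro j u v huv ⟨σ, hσ, hT⟩
    obtain ⟨τ, hτ, rfl⟩ := orbit_eq_iff.1 huv
    exact ⟨τ * σ, hτ.mul hσ, by simpa using hT.map hτ⟩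
  have h := growth hc 𝒢.orbit
    (fun j => {v | ∃ σ, 𝒢.IsAut σ ∧ 𝒢.Trip t (t + j) (σ x) v ∅}) t 𝒢.orbitNumber h1 h2
    ⟨x, 1, IsAut.one, (Trip.wait x h1 le_rfl (by omega)).mono (by simp)⟩
    (fun j _ => hsat j)
    (fun j hj u hu v huv => by
      obtain ⟨σ, hσ, hT⟩ := hu
      exact ⟨σ, hσ, (hT.trans (Trip.step (by omega) (by omega) huv)).mono (by simp)⟩)
  have hr : (Set.range 𝒢.orbit).ncard = 𝒢.orbitNumber := rfl
  rw [hr, min_eq_right (by omega), ← hr] at h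
  have heq := Set.eq_of_subset_of_ncard_le (Set.image_subset_range 𝒢.orbit _) h
    (Set.finite_range _)
  obtain ⟨u, hu, huy⟩ : 𝒢.orbit y ∈ 𝒢.orbit '' _ := heq ▸ Set.mem_range_self y
  exact hsat _ u y huy hu

/-! ### Exploring the orbit -/

/-- From any start, `J + r` steps suffice to reach a vertex of `S` outside `A`, once
`J + 1 > |A| n / |S|`: after `J` steps the reachable set `R` has density above `|A| / |S|` in
`V`, hence in some orbit. A walk of length `r` from that orbit to `S`, moved by a random
automorphism, starts in `R` with probability above `|A| / |S|` and ends in `A` with probability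
`|A| / |S|`. -/
theorem exists_trip_new {𝒢 : TemporalGraph V} (hc : 𝒢.IsConnectedTG) {S A : Finset V}
    (hS : 𝒢.FinOrbit S) (hA : A ⊂ S) (x : V) {t J : ℕ} (h1 : 1 ≤ t)
    (h2 : t + (J + 𝒢.orbitNumber) ≤ 𝒢.lifetime)
    (hJ : A.card * Fintype.card V < (J + 1) * S.card) :
    ∃ y ∈ S, y ∉ A ∧ 𝒢.Trip t (t + (J + 𝒢.orbitNumber)) x y ∅ := by
  classical
  set R := 𝒢.ball x t (t + J) with hR
  have hcard : A.card < S.card := Finset.card_lt_card hA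
  have hn : 0 < Fintype.card V := Fintype.card_pos_iff.2 ⟨x⟩
  have hRc : A.card * Fintype.card V < R.card * S.card := by
    have hb := card_ball hc x h1 (J := J) (by omega)
    rcases le_total (J + 1) (Fintype.card V) with h | h
    · rw [min_eq_left h] at hb
      exact hJ.trans_le (Nat.mul_le_mul_right _ hb)
    · rw [min_eq_right h] at hb
      calc _ < S.card * Fintype.card V := Nat.mul_lt_mul_of_pos_right hcard hn
        _ = Fintype.card V * S.card := mul_comm _ _
        _ ≤ _ := Nat.mul_le_mul_right _ hb
  have hG : 0 < 𝒢.autSet.card := Finset.card_pos.2 ⟨1, mem_autSet.2 IsAut.one⟩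
  obtain ⟨w, hw⟩ : ∃ w, 𝒢.autSet.card * A.card < S.card * 𝒢.hits w R := by
    by_contra! hcon
    have hsum := 𝒢.sum_hits Finset.univ R
    have e : ∑ σ ∈ 𝒢.autSet, ((Finset.univ : Finset V).image σ ∩ R).card
        = 𝒢.autSet.card * R.card := by
      rw [Finset.sum_const_nat]
      intro σ _
      rw [Finset.image_univ_of_surjective σ.surjective, Finset.univ_inter]
    have hle : ∑ w : V, S.card * 𝒢.hits w R ≤ ∑ _w : V, 𝒢.autSet.card * A.card :=
      Finset.sum_le_sum fun w _ => hcon w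
    rw [← Finset.mul_sum, hsum, e, Finset.sum_const, Finset.card_univ, smul_eq_mul] at hle
    have := Nat.mul_lt_mul_of_pos_left hRc hG
    nlinarith
  obtain ⟨v, hv⟩ := hS.nonempty
  obtain ⟨γ, hγ, hT⟩ := exists_trip_orbit hc w v (t := t + J) (by omega) (by omega)
  have hlt : 𝒢.hits v A < 𝒢.hits (γ w) R := by
    rw [hits_map hγ]
    rw [← hS.hits_mul hv hA.1] at hw
    exact Nat.lt_of_mul_lt_mul_left hw
  obtain ⟨σ, hσ1, hσ2⟩ := Finset.exists_mem_notMem_of_card_lt_card hlt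
  simp only [Finset.mem_filter, mem_autSet] at hσ1 hσ2
  have hσ3 : σ v ∉ A := fun h => hσ2 ⟨hσ1.1, h⟩
  refine ⟨σ v, hS.map σ hσ1.1 v hv, hσ3, ?_⟩
  rw [← add_assoc]
  exact ((mem_ball.1 hσ1.2).trans (hT.map hσ1.1)).mono (by simp)

/-- A walk that repeatedly heads for a new vertex of `S` sees `k` of them in `k (J + r)` steps. -/
theorem exists_trip_many {𝒢 : TemporalGraph V} (hc : 𝒢.IsConnectedTG) {S : Finset V}
    (hS : 𝒢.FinOrbit S) (x : V) {t J k : ℕ} (h1 : 1 ≤ t) (hk : k ≤ S.card)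
    (h2 : t + k * (J + 𝒢.orbitNumber) ≤ 𝒢.lifetime)
    (hJ : k * Fintype.card V < (J + 1) * S.card) :
    ∃ y, ∃ B ⊆ S, B.card = k ∧ 𝒢.Trip t (t + k * (J + 𝒢.orbitNumber)) x y B := by
  classical
  have key : ∀ i ≤ k, ∃ y, ∃ B ⊆ S, B.card = i ∧
      𝒢.Trip t (t + i * (J + 𝒢.orbitNumber)) x y B := by
    intro i
    induction i with
    | zero =>
      intro _
      exact ⟨x, ∅, by simp, rfl, (Trip.wait x h1 (by omega) (by omega)).mono (by simp)⟩
    | succ i ih =>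
      intro hi
      obtain ⟨y, B, hB, hBc, hT⟩ := ih (by omega)
      have hlt : t + i * (J + 𝒢.orbitNumber) + (J + 𝒢.orbitNumber) ≤ 𝒢.lifetime := by
        have := Nat.mul_le_mul_right (J + 𝒢.orbitNumber) hi
        rw [Nat.succ_mul] at this
        omega
      have hBS : B ⊂ S := by
        refine hB.ssubset_of_ne ?_
        rintro rfl
        omega
      obtain ⟨z, hzS, hzB, hT'⟩ := exists_trip_new hc hS hBS y
        (t := t + i * (J + 𝒢.orbitNumber)) (J := J) (by omega) hlt
        ((Nat.mul_le_mul_right _ (by omega)).trans_lt hJ)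
      refine ⟨z, B ∪ {z}, Finset.union_subset hB (by simpa using hzS), ?_, ?_⟩
      · rw [Finset.card_union_of_disjoint (by simpa using hzB), hBc, Finset.card_singleton]
      · have := hT.trans hT'.end_mem
        rwa [add_assoc, ← Nat.succ_mul] at this
  exact key k le_rfl

/-- Moving the walk of `exists_trip_many` by a suitable automorphism, it meets at least the
average share `k |U| / |S|` of the yet unvisited vertices `U`; `n` steps are spent on reaching the
start of the moved walk. -/
theorem exists_trip_share {𝒢 : TemporalGraph V} (hc : 𝒢.IsConnectedTG) {S U : Finset V}
    (hS : 𝒢.FinOrbit S) (hU : U ⊆ S) (x : V) {t J k : ℕ} (h1 : 1 ≤ t) (hk : k ≤ S.card)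
    (h2 : t + (Fintype.card V + k * (J + 𝒢.orbitNumber)) ≤ 𝒢.lifetime)
    (hJ : k * Fintype.card V < (J + 1) * S.card) :
    ∃ y, ∃ B ⊆ U, k * U.card ≤ S.card * B.card ∧
      𝒢.Trip t (t + (Fintype.card V + k * (J + 𝒢.orbitNumber))) x y B := by
  classical
  obtain ⟨y, B, hB, hBc, hT⟩ := exists_trip_many hc hS x (t := t + Fintype.card V) (J := J)
    (by omega) hk (by omega) hJ
  have hne : 𝒢.autSet.Nonempty := ⟨1, mem_autSet.2 IsAut.one⟩
  obtain ⟨σ, hσ, hle⟩ : ∃ σ ∈ 𝒢.autSet, k * U.card ≤ S.card * (B.image σ ∩ U).card := by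
    refine Finset.exists_le_of_sum_le hne ?_
    rw [← Finset.mul_sum 𝒢.autSet (fun σ => (B.image σ ∩ U).card), ← 𝒢.sum_hits,
      Finset.mul_sum, Finset.sum_congr rfl fun b hb => hS.hits_mul (hB hb) hU]
    simp only [Finset.sum_const, smul_eq_mul, hBc]
    exact le_of_eq (by ring)
  rw [mem_autSet] at hσ
  refine ⟨σ y, B.image σ ∩ U, Finset.inter_subset_right, hle, ?_⟩
  rw [← add_assoc]
  refine ((exists_trip hc x (σ x) h1 (by omega)).trans (hT.map hσ)).mono ?_
  rw [Finset.empty_union]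
  exact Finset.inter_subset_left

/-- After `j` rounds of `exists_trip_share`, at most `|S| (1 - k / |S|) ^ j` vertices of `S` are
left unvisited. -/
theorem exists_trip_rounds {𝒢 : TemporalGraph V} (hc : 𝒢.IsConnectedTG) {S : Finset V}
    (hS : 𝒢.FinOrbit S) (x : V) {t J k : ℕ} (h1 : 1 ≤ t) (hk : k ≤ S.card)
    (hJ : k * Fintype.card V < (J + 1) * S.card) (j : ℕ)
    (h2 : t + j * (Fintype.card V + k * (J + 𝒢.orbitNumber)) ≤ 𝒢.lifetime) :
    ∃ y, ∃ B ⊆ S, (S.card - B.card : ℝ) ≤ S.card * (1 - k / S.card : ℝ) ^ j ∧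
      𝒢.Trip t (t + j * (Fintype.card V + k * (J + 𝒢.orbitNumber))) x y B := by
  classical
  set D := Fintype.card V + k * (J + 𝒢.orbitNumber) with hD
  have hSpos : (0 : ℝ) < S.card := by exact_mod_cast hS.nonempty.card_pos
  induction j with
  | zero => exact ⟨x, ∅, by simp, by simp, (Trip.wait x h1 (by omega) (by omega)).mono (by simp)⟩
  | succ j ih =>
    rw [Nat.succ_mul] at h2 ⊢
    obtain ⟨y, B, hB, hBc, hT⟩ := ih (by omega)
    obtain ⟨z, B', hB', hBc', hT'⟩ := exists_trip_share hc hS (U := S \ B) Finset.sdiff_subset y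
      (t := t + j * D) (J := J) (by omega) hk (by omega) hJ
    have hdisj : Disjoint B B' :=
      Finset.disjoint_of_subset_right hB' Finset.disjoint_sdiff
    refine ⟨z, B ∪ B', Finset.union_subset hB (hB'.trans Finset.sdiff_subset), ?_, ?_⟩
    · rw [Finset.card_union_of_disjoint hdisj]
      have hU : ((S \ B).card : ℝ) = S.card - B.card := by
        rw [Finset.card_sdiff_of_subset hB, Nat.cast_sub (Finset.card_le_card hB)]
      have h3 : (k : ℝ) * (S.card - B.card) ≤ S.card * B'.card := by
        rw [← hU]; exact_mod_cast hBc'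
      have h4 : (k / S.card : ℝ) * (S.card - B.card) ≤ B'.card := by
        rw [div_mul_eq_mul_div, div_le_iff₀ hSpos]; linarith
      have h5 : (0 : ℝ) ≤ 1 - k / S.card := by
        rw [sub_nonneg, div_le_one hSpos]; exact_mod_cast hk
      calc (S.card - ((B.card + B'.card : ℕ) : ℝ) : ℝ)
          ≤ (1 - k / S.card) * (S.card - B.card) := by push_cast; linarith
        _ ≤ (1 - k / S.card) * (S.card * (1 - k / S.card : ℝ) ^ j) :=
          mul_le_mul_of_nonneg_left hBc h5
        _ = _ := by ring
    · have := hT.trans hT'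
      rwa [add_assoc] at this

/-- Once the rounds number more than `(|S| / k) ln |S|`, all of `S` is visited. -/
theorem exists_trip_all {𝒢 : TemporalGraph V} (hc : 𝒢.IsConnectedTG) {S : Finset V}
    (hS : 𝒢.FinOrbit S) (x : V) {t J k : ℕ} (h1 : 1 ≤ t) (hk : k ≤ S.card)
    (hJ : k * Fintype.card V < (J + 1) * S.card) (j : ℕ)
    (h2 : t + j * (Fintype.card V + k * (J + 𝒢.orbitNumber)) ≤ 𝒢.lifetime)
    (hj : S.card * Real.log S.card < j * k) :
    ∃ y, 𝒢.Trip t (t + j * (Fintype.card V + k * (J + 𝒢.orbitNumber))) x y S := by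
  obtain ⟨y, B, hB, hBc, hT⟩ := exists_trip_rounds hc hS x h1 hk hJ j h2
  have hSpos : (0 : ℝ) < S.card := by exact_mod_cast hS.nonempty.card_pos
  have h5 : (0 : ℝ) ≤ 1 - k / S.card := by
    rw [sub_nonneg, div_le_one hSpos]; exact_mod_cast hk
  have h6 : (1 - k / S.card : ℝ) ^ j ≤ Real.exp (-(j * k / S.card)) := by
    calc (1 - k / S.card : ℝ) ^ j ≤ (Real.exp (-(k / S.card))) ^ j :=
          pow_le_pow_left₀ h5 (Real.one_sub_le_exp_neg _) j
      _ = _ := by rw [← Real.exp_nat_mul]; congr 1; ring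
  have h7 : Real.exp (-(j * k / S.card)) < (S.card : ℝ)⁻¹ := by
    rw [← Real.exp_log hSpos, ← Real.exp_neg, Real.exp_log hSpos, Real.exp_lt_exp, neg_lt_neg_iff,
      lt_div_iff₀ hSpos]
    linarith
  have h8 : (S.card - B.card : ℝ) < 1 := by
    calc (S.card - B.card : ℝ) ≤ S.card * (1 - k / S.card : ℝ) ^ j := hBc
      _ < S.card * (S.card : ℝ)⁻¹ := mul_lt_mul_of_pos_left (h6.trans_lt h7) hSpos
      _ = 1 := mul_inv_cancel₀ hSpos.ne'
  have h9 : S.card ≤ B.card := by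
    have : (S.card : ℝ) < (B.card + 1 : ℕ) := by push_cast; linarith
    have := Nat.cast_lt.1 this
    omega
  have : B = S := Finset.eq_of_subset_of_card_le hB h9
  exact ⟨y, this ▸ hT⟩

theorem orbitNumber_pos (𝒢 : TemporalGraph V) (x : V) : 0 < 𝒢.orbitNumber :=
  (Set.ncard_pos (Set.finite_range _)).2 ⟨_, x, rfl⟩

theorem orbitNumber_le (𝒢 : TemporalGraph V) : 𝒢.orbitNumber ≤ Fintype.card V := by
  unfold orbitNumber
  rw [← Set.image_univ]
  refine (Set.ncard_image_le Set.finite_univ).trans ?_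
  rw [Set.ncard_univ, Nat.card_eq_fintype_card]

/-- Choice of the number `k ≈ min (√m) (n / r)` of vertices per round and of the number `j` of
rounds: with `m = |S|`, a round has at most `3 n` steps and `m / k = O(√n + r)`. -/
theorem exists_parameters {n r m : ℕ} (hn : 2 ≤ n) (hr : 0 < r) (hrn : r ≤ n) (hm : 0 < m)
    (hmn : m ≤ n) :
    ∃ k J j : ℕ, k ≤ m ∧ k * n < (J + 1) * m ∧ (m : ℝ) * Real.log m < j * k ∧
      ((j * (n + k * (J + r)) : ℕ) : ℝ)
        ≤ 12 * ((n : ℝ) ^ ((5 : ℝ) / 3) + (r : ℝ) * n) * Real.logb 2 n := by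
  set k := min (Nat.sqrt m) (n / r) with hkdef
  have hk1 : 1 ≤ k := le_min (Nat.sqrt_pos.2 hm) (Nat.div_pos hrn hr)
  have hk2 : k * k ≤ m := (Nat.mul_le_mul (min_le_left _ _) (min_le_left _ _)).trans
    (Nat.sqrt_le m)
  have hk3 : k * r ≤ n := (Nat.mul_le_mul_right r (min_le_right _ _)).trans
    (Nat.div_mul_le_self n r)
  have hkm : k ≤ m := (Nat.le_mul_self k).trans hk2
  have hround : k * (k * n / m) ≤ n := by
    refine (Nat.mul_div_le_mul_div_assoc k (k * n) m).trans ?_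
    rw [← mul_assoc]
    exact (Nat.div_le_div_right (Nat.mul_le_mul_right n hk2)).trans
      (Nat.mul_div_cancel_left n hm).le
  have hnR : (2 : ℝ) ≤ n := by exact_mod_cast hn
  have hmR : (1 : ℝ) ≤ m := by exact_mod_cast hm
  have hmnR : (m : ℝ) ≤ n := by exact_mod_cast hmn
  have hrR : (1 : ℝ) ≤ r := by exact_mod_cast hr
  have hkR : (1 : ℝ) ≤ k := by exact_mod_cast hk1
  have hsq1 : (1 : ℝ) ≤ √n := Real.one_le_sqrt.2 (by linarith)
  -- floors lose at most a factor two since both quantities are at least one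
  have hquot : (m : ℝ) / k ≤ 2 * (√n + r) := by
    rw [div_le_iff₀ (by linarith)]
    rcases min_choice (Nat.sqrt m) (n / r) with h | h
    · have h1 : m < (k + 1) * (k + 1) := by rw [hkdef, h]; exact Nat.lt_succ_sqrt m
      have h2 : (m : ℝ) ≤ (k + 1) * (k + 1) := by exact_mod_cast h1.le
      have h3 : √m ≤ k + 1 := Real.sqrt_le_iff.2 ⟨by linarith, by linarith [sq (k + 1 : ℝ)]⟩
      have h4 : √(m : ℝ) ≤ √n := Real.sqrt_le_sqrt hmnR
      have h5 : √(m : ℝ) * √m = m := Real.mul_self_sqrt (by linarith)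
      have h6 : (0 : ℝ) ≤ √m := Real.sqrt_nonneg _
      have h7 : √(m : ℝ) * √m ≤ √n * (2 * k) :=
        mul_le_mul h4 (by linarith) h6 (by linarith)
      nlinarith
    · have h1 : n < (k + 1) * r := by
        rw [hkdef, h, mul_comm]; exact Nat.lt_mul_div_succ n hr
      have h2 : (n : ℝ) ≤ (k + 1) * r := by exact_mod_cast h1.le
      nlinarith
  have hlog2 : (1 : ℝ) ≤ Real.logb 2 n := by
    rw [Real.le_logb_iff_rpow_le (by norm_num) (by linarith)]; simpa using hnR
  have hlogm : Real.log m ≤ Real.logb 2 n := by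
    have h1 : Real.log m ≤ Real.log n := Real.log_le_log (by linarith) hmnR
    have h2 : (0 : ℝ) ≤ Real.log n := Real.log_nonneg (by linarith)
    have h3 : Real.log 2 ≤ 1 := by linarith [Real.log_two_lt_d9]
    rw [Real.logb, le_div_iff₀ (Real.log_pos (by norm_num))]
    nlinarith [Real.log_pos (show (1 : ℝ) < 2 by norm_num)]
  have hlogm0 : 0 ≤ Real.log m := Real.log_nonneg hmR
  set j := ⌊(m : ℝ) / k * Real.log m⌋₊ + 1 with hj
  refine ⟨k, k * n / m, j, hkm, ?_, ?_, ?_⟩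
  · rw [mul_comm (k * n / m + 1)]
    exact Nat.lt_mul_div_succ _ hm
  · have h1 : (m : ℝ) / k * Real.log m < j := by
      rw [hj]; push_cast; exact Nat.lt_floor_add_one _
    have h2 := mul_lt_mul_of_pos_right h1 (show (0 : ℝ) < k by linarith)
    have h3 : (m : ℝ) / k * Real.log m * k = m * Real.log m := by field_simp
    linarith
  · have hjle : (j : ℝ) ≤ 3 * (√n + r) * Real.logb 2 n := by
      have h1 : (⌊(m : ℝ) / k * Real.log m⌋₊ : ℝ) ≤ (m : ℝ) / k * Real.log m :=
        Nat.floor_le (by positivity)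
      have h2 : (m : ℝ) / k * Real.log m ≤ 2 * (√n + r) * Real.logb 2 n :=
        mul_le_mul hquot hlogm hlogm0 (by linarith)
      have h3 : (1 : ℝ) ≤ (√n + r) * Real.logb 2 n := by nlinarith
      rw [hj]; push_cast; linarith
    have hD : n + k * (k * n / m + r) ≤ 3 * n := by rw [mul_add]; omega
    have hDR : ((n + k * (k * n / m + r) : ℕ) : ℝ) ≤ 3 * n := by exact_mod_cast hD
    have hpow : √(n : ℝ) * n ≤ (n : ℝ) ^ ((5 : ℝ) / 3) := by
      calc √(n : ℝ) * n = (n : ℝ) ^ ((3 : ℝ) / 2) := by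
            rw [Real.sqrt_eq_rpow, ← Real.rpow_add_one (by linarith)]; norm_num
        _ ≤ _ := Real.rpow_le_rpow_of_exponent_le (by linarith) (by norm_num)
    rw [Nat.cast_mul]
    calc (j : ℝ) * ((n + k * (k * n / m + r) : ℕ) : ℝ)
        ≤ (3 * (√n + r) * Real.logb 2 n) * (3 * n) :=
          mul_le_mul hjle hDR (Nat.cast_nonneg _) (by positivity)
      _ = 9 * (√n * n + r * n) * Real.logb 2 n := by ring
      _ ≤ 12 * ((n : ℝ) ^ ((5 : ℝ) / 3) + (r : ℝ) * n) * Real.logb 2 n := by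
          refine mul_le_mul_of_nonneg_right ?_ (by linarith)
          have : (0 : ℝ) ≤ r * n := by positivity
          have : (0 : ℝ) ≤ √(n : ℝ) * n := by positivity
          linarith

end TemporalGraph

/-- Theorem 4.4: there is a universal constant `C > 0` such that in any
connected temporal graph with `n ≥ 2` vertices and orbit number `r`, any orbit `S` can
be fully visited by a temporal walk starting at any suitable time step `t` and spanning
at most `C·(n^{5/3} + r·n)·log₂ n` time steps. -/
theorem orbit_exploration :
    ∃ C : ℝ, 0 < C ∧
      ∀ (V : Type) [Fintype V], ∀ 𝒢 : TemporalGraph V, 𝒢.IsConnectedTG →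
      ∀ n r : ℕ, n = Fintype.card V → 2 ≤ n → r = 𝒢.orbitNumber →
      ∀ S : Set V, 𝒢.IsOrbit S →
      ∀ t : ℕ, 1 ≤ t →
      (t : ℝ) + C * ((n : ℝ) ^ ((5 : ℝ) / 3) + (r : ℝ) * n) * Real.logb 2 n
          ≤ (𝒢.lifetime : ℝ) →
      ∃ t' : ℕ, t ≤ t' ∧
        (t' : ℝ) - (t : ℝ)
          ≤ C * ((n : ℝ) ^ ((5 : ℝ) / 3) + (r : ℝ) * n) * Real.logb 2 n ∧
        ∃ W : ℕ → V, 𝒢.IsWalk W t t' ∧ S ⊆ TemporalGraph.visited W t t' := by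
  classical
  refine ⟨12, by norm_num, ?_⟩
  intro V _ 𝒢 hc n r hn hn2 hr S hS t ht hlife
  obtain ⟨u, rfl⟩ := hS
  have hmem : ∀ v, v ∈ (𝒢.orbit u).toFinset ↔ ∃ σ, 𝒢.IsAut σ ∧ σ u = v := fun v => by
    rw [Set.mem_toFinset]; rfl
  have hF : 𝒢.FinOrbit (𝒢.orbit u).toFinset := by
    refine ⟨⟨u, (hmem u).2 ⟨1, TemporalGraph.IsAut.one, rfl⟩⟩, ?_, ?_⟩
    · intro σ hσ v hv
      obtain ⟨τ, hτ, rfl⟩ := (hmem v).1 hv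
      exact (hmem _).2 ⟨σ * τ, hσ.mul hτ, rfl⟩
    · intro v hv w hw
      obtain ⟨τ, hτ, rfl⟩ := (hmem v).1 hv
      obtain ⟨σ, hσ, rfl⟩ := (hmem w).1 hw
      exact ⟨σ * τ⁻¹, hσ.mul hτ.inv, by simp⟩
  have hr0 : 0 < r := hr ▸ 𝒢.orbitNumber_pos u
  have hrn : r ≤ n := by rw [hr, hn]; exact 𝒢.orbitNumber_le
  obtain ⟨k, J, j, hk, hJ, hj, hbound⟩ := TemporalGraph.exists_parameters hn2 hr0 hrn
    hF.nonempty.card_pos (hn ▸ Finset.card_le_univ _)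
  have hle : t + j * (n + k * (J + r)) ≤ 𝒢.lifetime := by
    have : ((t + j * (n + k * (J + r)) : ℕ) : ℝ) ≤ 𝒢.lifetime := by
      rw [Nat.cast_add]; linarith
    exact_mod_cast this
  subst hn hr
  obtain ⟨y, W, hW, -, -, hV⟩ :=
    TemporalGraph.exists_trip_all hc hF u ht hk hJ j hle hj
  refine ⟨_, Nat.le_add_right _ _, ?_, W, hW, ?_⟩
  · rw [Nat.cast_add]; linarith
  · simpa using hV
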